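/- arXiv:2405.16651 — 2 statements merged into one kernel-verified Lean document; each statement's English description precedes it below -/
import Mathlib

section
/- Let M ≥ 1, N ≥ 1, let B be a real N×N matrix, let b₀ > 0, and suppose ‖B‖ ≤ 1 + b₀, where ‖·‖ is the spectral norm. Let S be the M×M subdiagonal shift matrix. Then the inverse of I_{MN} − S ⊗ B satisfies ‖(I_{MN} − S ⊗ B)⁻¹‖ ≤ ((1 + b₀)^M − 1)/b₀. -/
open Matrix
open scoped Kronecker

/-- The ℓ²→ℓ² operator (spectral) norm of a matrix. -/
noncomputable def specNorm {𝕜 : Type*} [RCLike 𝕜] {n : Type*} [Fintype n] [DecidableEq n]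
    (A : Matrix n n 𝕜) : ℝ :=
  ‖LinearMap.toContinuousLinearMap (Matrix.toEuclideanLin A)‖

/-- The M×M subdiagonal shift matrix: entry (i,j) is 1 if i = j+1 and 0 otherwise. -/
def shiftMatrix (M : ℕ) : Matrix (Fin M) (Fin M) ℝ :=
  Matrix.of fun i j => if (i : ℕ) = (j : ℕ) + 1 then 1 else 0

/-!
The spectral norm is submultiplicative for Kronecker products, so `T = S ⊗ B` has norm at most
`1 + b₀`, since `Sᴴ S` is diagonal with entries `0` and `1`. As `T ^ M = S ^ M ⊗ B ^ M = 0`, the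
Neumann series of `(1 - T)⁻¹` stops after `M` terms, and bounding it term by term leaves a geometric
sum of ratio `1 + b₀`.
-/

open scoped Matrix.Norms.L2Operator

section NeumannSeries

lemma norm_geom_sum_le {R : Type*} [SeminormedRing R] (hone : ‖(1 : R)‖ ≤ 1) {x : R} {c : ℝ}
    (hx : ‖x‖ ≤ c) (d : ℕ) :
    ‖∑ k ∈ Finset.range d, x ^ k‖ ≤ ∑ k ∈ Finset.range d, c ^ k := by
  refine norm_sum_le_of_le _ fun k _ ↦ ?_
  rcases k.eq_zero_or_pos with rfl | hk
  · simpa only [pow_zero] using hone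
  · exact (norm_pow_le' x hk).trans (pow_le_pow_left₀ (norm_nonneg x) hx k)

lemma inv_one_sub_eq_geom_sum {R n : Type*} [CommRing R] [Fintype n] [DecidableEq n]
    {T : Matrix n n R} {d : ℕ} (hT : T ^ d = 0) :
    (1 - T)⁻¹ = ∑ k ∈ Finset.range d, T ^ k :=
  inv_eq_right_inv (by rw [mul_neg_geom_sum, hT, sub_zero])

end NeumannSeries

section Kronecker

lemma kronecker_pow {R m n : Type*} [CommSemiring R] [Fintype m] [DecidableEq m] [Fintype n]
    [DecidableEq n] (A : Matrix m m R) (B : Matrix n n R) (k : ℕ) :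
    (A ⊗ₖ B) ^ k = (A ^ k) ⊗ₖ (B ^ k) := by
  induction k with
  | zero => simp only [pow_zero, one_kronecker_one]
  | succ k ih => simp only [pow_succ, ih, mul_kronecker_mul]

lemma kronecker_mulVec_apply {R l m n p : Type*} [CommSemiring R] [Fintype m] [Fintype n]
    (A : Matrix l m R) (B : Matrix p n R) (v : m × n → R) (i : l) (j : p) :
    ((A ⊗ₖ B) *ᵥ v) (i, j) = (A *ᵥ fun k ↦ (B *ᵥ fun q ↦ v (k, q)) j) i := by
  simp only [mulVec, dotProduct, Fintype.sum_prod_type, kroneckerMap_apply, Finset.mul_sum,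
    mul_assoc]

end Kronecker

section L2OpNorm

variable {𝕜 l m n p : Type*} [RCLike 𝕜] [Fintype l] [Fintype m] [Fintype n]
  [DecidableEq n] [Fintype p]

lemma specNorm_eq_l2_opNorm (A : Matrix n n 𝕜) : specNorm A = ‖A‖ := rfl

lemma l2_opNorm_one_le_one : ‖(1 : Matrix n n 𝕜)‖ ≤ 1 := by
  rw [← diagonal_one, l2_opNorm_diagonal]
  exact (pi_norm_le_iff_of_nonneg zero_le_one).mpr fun _ ↦ norm_one.le

lemma sum_norm_sq_mulVec_le (A : Matrix m n 𝕜) (v : n → 𝕜) :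
    ∑ i, ‖(A *ᵥ v) i‖ ^ 2 ≤ ‖A‖ ^ 2 * ∑ j, ‖v j‖ ^ 2 := by
  have hsq := pow_le_pow_left₀ (norm_nonneg _) (l2_opNorm_mulVec A (WithLp.toLp 2 v)) 2
  rwa [mul_pow, EuclideanSpace.norm_sq_eq, EuclideanSpace.norm_sq_eq] at hsq

lemma l2_opNorm_le_of_sum_norm_sq_le {A : Matrix m n 𝕜} {c : ℝ} (hc : 0 ≤ c)
    (h : ∀ v : n → 𝕜, ∑ i, ‖(A *ᵥ v) i‖ ^ 2 ≤ c ^ 2 * ∑ j, ‖v j‖ ^ 2) : ‖A‖ ≤ c := by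
  refine ContinuousLinearMap.opNorm_le_bound _ hc fun x ↦ le_of_sq_le_sq ?_ (by positivity)
  rw [mul_pow, EuclideanSpace.norm_sq_eq, EuclideanSpace.norm_sq_eq]
  exact h x.ofLp

lemma l2_opNorm_kronecker_le [DecidableEq m] (A : Matrix l m 𝕜) (B : Matrix p n 𝕜) :
    ‖A ⊗ₖ B‖ ≤ ‖A‖ * ‖B‖ := by
  refine l2_opNorm_le_of_sum_norm_sq_le (by positivity) fun v ↦ ?_
  calc ∑ x, ‖((A ⊗ₖ B) *ᵥ v) x‖ ^ 2
      = ∑ j, ∑ i, ‖(A *ᵥ fun k ↦ (B *ᵥ fun q ↦ v (k, q)) j) i‖ ^ 2 := by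
        simp only [Fintype.sum_prod_type_right, kronecker_mulVec_apply]
    _ ≤ ∑ j, ‖A‖ ^ 2 * ∑ k, ‖(B *ᵥ fun q ↦ v (k, q)) j‖ ^ 2 :=
        Finset.sum_le_sum fun _ _ ↦ sum_norm_sq_mulVec_le A _
    _ = ‖A‖ ^ 2 * ∑ k, ∑ j, ‖(B *ᵥ fun q ↦ v (k, q)) j‖ ^ 2 := by
        rw [← Finset.mul_sum, Finset.sum_comm]
    _ ≤ ‖A‖ ^ 2 * ∑ k, ‖B‖ ^ 2 * ∑ q, ‖v (k, q)‖ ^ 2 := by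
        gcongr
        exact sum_norm_sq_mulVec_le B _
    _ = (‖A‖ * ‖B‖) ^ 2 * ∑ x, ‖v x‖ ^ 2 := by
        rw [← Finset.mul_sum, Fintype.sum_prod_type, mul_pow, mul_assoc]

end L2OpNorm

section Shift

lemma shiftMatrix_apply {M : ℕ} (i j : Fin M) :
    shiftMatrix M i j = if (i : ℕ) = j + 1 then 1 else 0 := rfl

lemma shiftMatrix_pow_apply_eq_zero {M k : ℕ} {i : Fin M} (hi : (i : ℕ) < k) (j : Fin M) :
    (shiftMatrix M ^ k) i j = 0 := by
  induction k generalizing i with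
  | zero => exact absurd hi (Nat.not_lt_zero _)
  | succ k ih =>
    rw [pow_succ', mul_apply]
    refine Finset.sum_eq_zero fun r _ ↦ ?_
    rw [shiftMatrix_apply]
    split_ifs with hr
    · rw [ih (by lia), mul_zero]
    · exact zero_mul _

lemma shiftMatrix_pow_self (M : ℕ) : shiftMatrix M ^ M = 0 :=
  Matrix.ext fun i j ↦ shiftMatrix_pow_apply_eq_zero i.isLt j

lemma conjTranspose_shiftMatrix_mul_self (M : ℕ) :
    (shiftMatrix M)ᴴ * shiftMatrix M =
      diagonal fun j : Fin M ↦ if (j : ℕ) + 1 < M then 1 else 0 := by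
  ext i j
  simp only [mul_apply, conjTranspose_apply, shiftMatrix_apply, star_trivial, diagonal_apply]
  by_cases hi : (i : ℕ) + 1 < M
  · rw [Finset.sum_eq_single ⟨i + 1, hi⟩] <;> grind
  · rw [Finset.sum_eq_zero] <;> grind

lemma l2_opNorm_shiftMatrix_le_one (M : ℕ) : ‖shiftMatrix M‖ ≤ 1 := by
  refine (sq_le_one_iff₀ (norm_nonneg _)).mp ?_
  rw [sq, ← l2_opNorm_conjTranspose_mul_self, conjTranspose_shiftMatrix_mul_self,
    l2_opNorm_diagonal]
  refine (pi_norm_le_iff_of_nonneg zero_le_one).mpr fun j ↦ ?_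
  split_ifs <;> simp

end Shift

theorem stmt5_general {𝕜 m n : Type*} [RCLike 𝕜] [Fintype m] [DecidableEq m] [Fintype n]
    [DecidableEq n] {d : ℕ} {A : Matrix m m 𝕜} (hAd : A ^ d = 0) (hA : specNorm A ≤ 1)
    {B : Matrix n n 𝕜} {b₀ : ℝ} (hb₀ : b₀ ≠ 0) (hB : specNorm B ≤ 1 + b₀) :
    specNorm (1 - A ⊗ₖ B)⁻¹ ≤ ((1 + b₀) ^ d - 1) / b₀ := by
  rw [specNorm_eq_l2_opNorm] at hA hB ⊢
  have hnorm : ‖A ⊗ₖ B‖ ≤ 1 + b₀ := calc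
    ‖A ⊗ₖ B‖ ≤ ‖A‖ * ‖B‖ := l2_opNorm_kronecker_le A B
    _ ≤ ‖B‖ := mul_le_of_le_one_left (norm_nonneg B) hA
    _ ≤ 1 + b₀ := hB
  have hnil : (A ⊗ₖ B) ^ d = 0 := by rw [kronecker_pow, hAd, zero_kronecker]
  calc ‖(1 - A ⊗ₖ B)⁻¹‖
      = ‖∑ k ∈ Finset.range d, (A ⊗ₖ B) ^ k‖ := by rw [inv_one_sub_eq_geom_sum hnil]
    _ ≤ ∑ k ∈ Finset.range d, (1 + b₀) ^ k := norm_geom_sum_le l2_opNorm_one_le_one hnorm d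
    _ = ((1 + b₀) ^ d - 1) / b₀ := by
        rw [geom_sum_eq (by simpa using hb₀), add_sub_cancel_left]

theorem stmt5 {M N : ℕ} (hM : 1 ≤ M) (hN : 1 ≤ N)
    (B : Matrix (Fin N) (Fin N) ℝ) (b₀ : ℝ) (hb₀ : 0 < b₀)
    (hB : specNorm B ≤ 1 + b₀) :
    specNorm ((1 : Matrix (Fin M × Fin N) (Fin M × Fin N) ℝ) - shiftMatrix M ⊗ₖ B)⁻¹
      ≤ ((1 + b₀) ^ M - 1) / b₀ :=
  have hS := (specNorm_eq_l2_opNorm (shiftMatrix M)).trans_le (l2_opNorm_shiftMatrix_le_one M)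
  stmt5_general (shiftMatrix_pow_self M) hS hb₀.ne' hB
end

section
/- Let M ≥ 1, N ≥ 1, let A be a real N×N matrix, and let h > 0 be such that I_N − h·A is invertible, with B = (I_N − h·A)⁻¹. Let Ã_b = I_{MN} − S ⊗ I_N − h·(E ⊗ A) be the backward-Euler block matrix. Then Ã_b is invertible, and its inverse is the block lower-triangular matrix C whose (i,j) block (1 ≤ j ≤ i ≤ M) is C_{i1} = B^{i−1} for j = 1, C_{ij} = B^{i−j+1} for 2 ≤ j ≤ i, and C_{ij} = 0 for j > i; that is, Ã_b · C = I_{MN}. -/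
open Matrix
open scoped Kronecker

/-- The M×M diagonal matrix with first diagonal entry 0 and all other diagonal entries 1. -/
def ediagMatrix (M : ℕ) : Matrix (Fin M) (Fin M) ℝ :=
  Matrix.of fun i j => if i = j ∧ (i : ℕ) ≠ 0 then 1 else 0

/-- The block lower-triangular matrix whose (i,j) block (0-based indices) is `B^i` for
`j = 0`, `B^(i-j+1)` for `1 ≤ j ≤ i`, and `0` for `j > i`. -/
def blockInv {M N : ℕ} (B : Matrix (Fin N) (Fin N) ℝ) :
    Matrix (Fin M × Fin N) (Fin M × Fin N) ℝ :=
  Matrix.of fun p q =>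
    if (q.1 : ℕ) = 0 then (B ^ (p.1 : ℕ)) p.2 q.2
    else if (q.1 : ℕ) ≤ (p.1 : ℕ) then (B ^ ((p.1 : ℕ) - (q.1 : ℕ) + 1)) p.2 q.2
    else 0

/-!
Regard a block matrix as a matrix over the ring of its blocks. With `D = I - hA`, row `i` of the
system `Ã_b x = f` then reads `x₀ = f₀` for `i = 0`, and `D xᵢ - xᵢ₋₁ = fᵢ`, one backward Euler
step, for `i ≥ 1`. Column `j` of the inverse is therefore the response to a unit load at step `j`:
it vanishes before step `j` and is multiplied by `B = D⁻¹` at every later step. A load at `j ≥ 1`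
already has to pass through `D` at step `j` itself, whereas the initial row does not contain `D`;
hence the extra factor `B` in all columns but the first.
-/

section Ring

variable {R : Type*} [Ring R]

/-- The matrix of the backward Euler steps `D * x (i + 1) - x i` together with the initial
row `x 0`: the diagonal is `1, D, D, …` and the subdiagonal is constantly `-1`. For the matrix `Ã_b`
take `R` to be the ring of `N × N` blocks and `D = 1 - h • A`. -/
def backwardEulerMatrix (M : ℕ) (D : R) : Matrix (Fin M) (Fin M) R :=
  Matrix.of fun i j =>
    if i = j then (if (i : ℕ) = 0 then 1 else D) else if (i : ℕ) = j + 1 then -1 else 0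

/-- The discrete Green's function of backward Euler: the value at step `i` of the solution
with a unit load at step `j`, where `B` is the one-step propagator. These are the blocks of
`blockInv B`. -/
def backwardEulerGreen (B : R) (i j : ℕ) : R :=
  if j = 0 then B ^ i else if j ≤ i then B ^ (i - j + 1) else 0

theorem backwardEulerMatrix_zero (M : ℕ) (D : R) :
    backwardEulerMatrix (M + 1) D 0 = Pi.single 0 1 := by
  ext j
  simp [backwardEulerMatrix, Pi.single_apply, eq_comm]

theorem backwardEulerMatrix_succ {M : ℕ} (D : R) (i : Fin M) :
    backwardEulerMatrix (M + 1) D i.succ = Pi.single i.succ D - Pi.single i.castSucc 1 := by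
  ext j
  simp only [backwardEulerMatrix, Matrix.of_apply, Pi.sub_apply, Pi.single_apply, Fin.ext_iff,
    Fin.val_succ, Fin.val_castSucc]
  grind

theorem backwardEulerMatrix_mul_zero {M : ℕ} {n : Type*} (D : R)
    (X : Matrix (Fin (M + 1)) n R) (k : n) :
    (backwardEulerMatrix (M + 1) D * X) 0 k = X 0 k := by
  rw [mul_apply', backwardEulerMatrix_zero, single_dotProduct, one_mul]

theorem backwardEulerMatrix_mul_succ {M : ℕ} {n : Type*} (D : R)
    (X : Matrix (Fin (M + 1)) n R) (i : Fin M) (k : n) :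
    (backwardEulerMatrix (M + 1) D * X) i.succ k = D * X i.succ k - X i.castSucc k := by
  rw [mul_apply', backwardEulerMatrix_succ, sub_dotProduct, single_dotProduct, single_dotProduct,
    one_mul]

theorem backwardEulerGreen_zero_left (B : R) (j : ℕ) :
    backwardEulerGreen B 0 j = if 0 = j then 1 else 0 := by
  grind [backwardEulerGreen]

theorem backwardEulerGreen_step {D B : R} (hDB : D * B = 1) (i j : ℕ) :
    D * backwardEulerGreen B (i + 1) j - backwardEulerGreen B i j =
      if i + 1 = j then 1 else 0 := by
  have mul_pow_succ (n : ℕ) : D * B ^ (n + 1) = B ^ n := by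
    rw [pow_succ', ← mul_assoc, hDB, one_mul]
  unfold backwardEulerGreen
  rcases Nat.eq_zero_or_pos j with rfl | hj
  · simp [mul_pow_succ]
  rcases lt_trichotomy (i + 1) j with before | rfl | after
  · simp [hj.ne', before.ne, before.not_ge, (Nat.lt_of_succ_lt before).not_ge]
  · simp [hDB]
  · have hji : j ≤ i := Nat.le_of_lt_succ after
    simp [hj.ne', hji, after.le, after.ne', Nat.sub_add_comm hji, mul_pow_succ]

theorem backwardEulerMatrix_mul_green (M : ℕ) {D B : R} (hDB : D * B = 1) :
    backwardEulerMatrix M D * Matrix.of (fun i j : Fin M => backwardEulerGreen B i j) = 1 := by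
  ext i j
  cases M with
  | zero => exact i.elim0
  | succ M =>
    cases i using Fin.cases with
    | zero =>
      simp only [backwardEulerMatrix_mul_zero, of_apply, Fin.val_zero,
        backwardEulerGreen_zero_left, one_apply, Fin.ext_iff]
    | succ i =>
      simp only [backwardEulerMatrix_mul_succ, of_apply, Fin.val_succ, Fin.val_castSucc,
        backwardEulerGreen_step hDB, one_apply, Fin.ext_iff]

end Ring

section Blocks

variable {M N : ℕ}

theorem compRingEquiv_backwardEulerMatrix (A : Matrix (Fin N) (Fin N) ℝ) (h : ℝ) :
    compRingEquiv (Fin M) (Fin N) ℝ (backwardEulerMatrix M (1 - h • A)) =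
      1 - shiftMatrix M ⊗ₖ (1 : Matrix (Fin N) (Fin N) ℝ) - h • (ediagMatrix M ⊗ₖ A) := by
  ext ⟨i, a⟩ ⟨j, b⟩
  rw [← comp_one]
  simp only [backwardEulerMatrix, shiftMatrix, ediagMatrix, compRingEquiv_apply, comp_apply,
    Matrix.sub_apply, Matrix.smul_apply, kroneckerMap_apply, of_apply, one_apply (i := i)]
  split_ifs <;> first | omega | simp_all

theorem compRingEquiv_backwardEulerGreen (B : Matrix (Fin N) (Fin N) ℝ) :
    compRingEquiv (Fin M) (Fin N) ℝ (Matrix.of fun i j => backwardEulerGreen B i j) =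
      blockInv B := by
  ext ⟨i, a⟩ ⟨j, b⟩
  simp only [compRingEquiv_apply, comp_apply, of_apply, backwardEulerGreen, blockInv]
  split_ifs <;> rfl

end Blocks

theorem stmt15 {M N : ℕ} (hM : 1 ≤ M) (hN : 1 ≤ N)
    (A : Matrix (Fin N) (Fin N) ℝ) (h : ℝ) (hh : 0 < h)
    (hinv : IsUnit ((1 : Matrix (Fin N) (Fin N) ℝ) - h • A))
    (B : Matrix (Fin N) (Fin N) ℝ)
    (hB : B = ((1 : Matrix (Fin N) (Fin N) ℝ) - h • A)⁻¹) :
    IsUnit ((1 : Matrix (Fin M × Fin N) (Fin M × Fin N) ℝ)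
        - shiftMatrix M ⊗ₖ (1 : Matrix (Fin N) (Fin N) ℝ)
        - h • (ediagMatrix M ⊗ₖ A)) ∧
      ((1 : Matrix (Fin M × Fin N) (Fin M × Fin N) ℝ)
        - shiftMatrix M ⊗ₖ (1 : Matrix (Fin N) (Fin N) ℝ)
        - h • (ediagMatrix M ⊗ₖ A)) * blockInv B = 1 := by
  have hDB : (1 - h • A) * B = 1 := by
    rw [hB, mul_nonsing_inv _ ((isUnit_iff_isUnit_det _).mp hinv)]
  rw [← compRingEquiv_backwardEulerMatrix, ← compRingEquiv_backwardEulerGreen]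
  have mul_eq_one :=
    congrArg (compRingEquiv (Fin M) (Fin N) ℝ) (backwardEulerMatrix_mul_green M hDB)
  rw [map_mul, map_one] at mul_eq_one
  exact ⟨.of_mul_eq_one _ mul_eq_one, mul_eq_one⟩
end
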